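/- Brothers–Marcellini-type non-uniqueness on the disk: let Ω = B(0,1) ⊂ ℝ², Γ = {(x,y) ∈ ∂Ω : |y| > 1/√2}, f = 0 on {y < −1/√2}, f = 1 on {y > 1/√2}. For each λ ∈ [0,1], the function u_λ equal to 0 for y < −1/√2, λ for |y| < 1/√2, and 1 for y > 1/√2, together with the vector field z = (0,1) on {|x| < 1/√2} and z = (0,0) on {|x| > 1/√2}, satisfies all four conditions of the 1-Laplace formulation: |z| ≤ 1, div z = 0 in D'(Ω), (z,Du_λ) = |Du_λ| as measures, [z,ν] ∈ sign(f−u_λ) on Γ, [z,ν] = 0 on ∂Ω∖Γ. -/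

import Mathlib

open Set MeasureTheory Filter Topology
open scoped RealInnerProductSpace Classical

abbrev E2 := EuclideanSpace ℝ (Fin 2)

/-- `z` is divergence-free in `𝒟'(Ω)`. -/
def DivFreeOn (Ω : Set E2) (z : E2 → E2) : Prop :=
  ∀ ϕ : E2 → ℝ, ContDiff ℝ (⊤ : ℕ∞) ϕ → HasCompactSupport ϕ →
    tsupport ϕ ⊆ Ω → ∫ x in Ω, ⟪z x, gradient ϕ x⟫ = 0

/-- The divergence of a vector field on `ℝ²`. -/
noncomputable def div2 (w : E2 → E2) (x : E2) : ℝ :=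
  ∑ i : Fin 2, fderiv ℝ w x (EuclideanSpace.single i 1) i

/-!
Integrating by parts along vertical lines identifies `|Du_λ|` with the measure `ρ` that carries the
length on the lines `y = ±1/√2` with densities `λ` and `1 - λ`. Since `2c² = 1` for `c = 1/√2`,
these lines meet the disk only where `|x| < c`, so the pairing with `z` sees all of `ρ`, and both
`|Du_λ|` and `(z, Du_λ)` restrict to `ρ` on the disk. In Green's formula the same integration shows
that `[z, ν] dσ` is the difference of the images of `dx` on the two arcs `|x| < c`,
`y = ±√(1 - x²)`. Each image is at most arc length, which gives `|[z, ν]| ≤ 1`, and neither charges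
`|y| ≤ c`, which gives `[z, ν] = 0` off `Γ`. Near each point of `Γ` the function `u_λ` is constant,
equal to `f`, so that its trace there is `f`.
-/

section MeasureBounds

variable {X : Type*} [MeasurableSpace X] {μ : Measure X} {s : Set X} {φ : X → ℝ}

lemma measure_le_ofReal_integral (hs : MeasurableSet s) (hφ : Integrable φ μ)
    (hφ₀ : ∀ x, 0 ≤ φ x) (hφs : ∀ x ∈ s, φ x = 1) : μ s ≤ ENNReal.ofReal (∫ x, φ x ∂μ) := by
  rw [ofReal_integral_eq_lintegral_ofReal hφ (Eventually.of_forall hφ₀),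
    ← lintegral_indicator_one hs]
  refine lintegral_mono (indicator_le' (fun x hx => ?_) fun _ _ => ?_)
  · simp [hφs x hx]
  · simp

lemma ofReal_integral_le_measure (hs : MeasurableSet s) (hφ : ∀ x, |φ x| ≤ 1)
    (hφs : ∀ x ∉ s, φ x = 0) : ENNReal.ofReal (∫ x, φ x ∂μ) ≤ μ s :=
  calc ENNReal.ofReal (∫ x, φ x ∂μ)
      ≤ ‖∫ x, φ x ∂μ‖ₑ := Real.ofReal_le_enorm _
    _ ≤ ∫⁻ x, ‖φ x‖ₑ ∂μ := enorm_integral_le_lintegral_enorm _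
    _ ≤ ∫⁻ x, s.indicator 1 x ∂μ := lintegral_mono fun x => by
        by_cases hx : x ∈ s
        · simpa [hx, Real.enorm_eq_ofReal_abs] using hφ x
        · simp [hx, hφs x hx]
    _ = μ s := lintegral_indicator_one hs

lemma measure_le_of_isCompact_le [TopologicalSpace X] [LocallyCompactSpace X]
    [SecondCountableTopology X] {U : Set X} (hU : IsOpen U) {C : ENNReal}
    (h : ∀ K ⊆ U, IsCompact K → μ K ≤ C) : μ U ≤ C := by
  have := hU.locallyCompactSpace
  obtain ⟨K, hK, hKU⟩ : IsSigmaCompact U :=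
    isSigmaCompact_iff_isSigmaCompact_univ.2 isSigmaCompact_univ
  rw [← hKU, measure_iUnion_eq_iSup_accumulate]
  exact iSup_le fun n => h _
    ((accumulate_subset_iUnion n).trans hKU.subset) (isCompact_accumulate hK n)

lemma restrict_eq_of_isOpen [TopologicalSpace X] [BorelSpace X] {ν : Measure X} {U : Set X}
    (hU : IsOpen U) (hμU : μ U ≠ ⊤) (h : ∀ A ⊆ U, IsOpen A → μ A = ν A) :
    μ.restrict U = ν.restrict U := by
  have : IsFiniteMeasure (μ.restrict U) := isFiniteMeasure_restrict.2 hμU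
  refine ext_of_generate_finite {A | IsOpen A} BorelSpace.measurable_eq isPiSystem_isOpen
    (fun A (hA : IsOpen A) => ?_) (by simpa using h U subset_rfl hU)
  rw [Measure.restrict_apply hA.measurableSet, Measure.restrict_apply hA.measurableSet]
  exact h _ inter_subset_right (hA.inter hU)

end MeasureBounds

section TestFunctions

open scoped ContDiff

/-- Real test functions on `Ω`, the elements of `𝒟(Ω)`. -/
structure IsTestFunction {E : Type*} [NormedAddCommGroup E] [NormedSpace ℝ E]
    (Ω : Set E) (φ : E → ℝ) : Prop where
  contDiff : ContDiff ℝ ∞ φ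
  hasCompactSupport : HasCompactSupport φ
  tsupport_subset : tsupport φ ⊆ Ω

variable {E : Type*} [NormedAddCommGroup E] [NormedSpace ℝ E]

namespace IsTestFunction

variable {Ω Ω' : Set E} {φ : E → ℝ}

lemma mono (hφ : IsTestFunction Ω φ) (h : Ω ⊆ Ω') : IsTestFunction Ω' φ :=
  ⟨hφ.contDiff, hφ.hasCompactSupport, hφ.tsupport_subset.trans h⟩

lemma contDiff_one (hφ : IsTestFunction Ω φ) : ContDiff ℝ 1 φ :=
  hφ.contDiff.of_le (mod_cast le_top)

lemma eq_zero_of_notMem (hφ : IsTestFunction Ω φ) {x : E} (hx : x ∉ Ω) : φ x = 0 :=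
  image_eq_zero_of_notMem_tsupport fun h => hx (hφ.tsupport_subset h)

lemma integrable [MeasurableSpace E] [BorelSpace E] (hφ : IsTestFunction Ω φ)
    (μ : Measure E) [IsFiniteMeasureOnCompacts μ] : Integrable φ μ :=
  hφ.contDiff.continuous.integrable_of_hasCompactSupport hφ.hasCompactSupport

end IsTestFunction

variable [FiniteDimensional ℝ E]

lemma exists_isTestFunction_eq_one {K A : Set E} (hK : IsCompact K) (hA : IsOpen A)
    (hKA : K ⊆ A) :
    ∃ φ : E → ℝ, IsTestFunction A φ ∧ (∀ x, φ x ∈ Icc 0 1) ∧ ∀ x ∈ K, φ x = 1 := by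
  obtain ⟨L, hL, hKL, hLA⟩ := exists_compact_between hK hA hKA
  obtain ⟨φ, hφ₀, hφ₁, hφ⟩ := exists_contMDiffMap_zero_one_of_isClosed (n := ⊤)
    (modelWithCornersSelf ℝ E) isOpen_interior.isClosed_compl hK.isClosed
    (disjoint_compl_left_iff_subset.2 hKL)
  have hφL : tsupport φ ⊆ L := closure_minimal
    (fun x hx => interior_subset (not_not.1 fun h => hx (hφ₀ h))) hL.isClosed
  exact ⟨φ, ⟨φ.contMDiff.contDiff, hL.of_isClosed_subset (isClosed_tsupport _) hφL,
    hφL.trans hLA⟩, hφ, fun x hx => hφ₁ hx⟩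

variable [MeasurableSpace E] [BorelSpace E] {μ ν : Measure E} {Ω : Set E}

lemma measure_le_of_integral_isTestFunction_eq
    (hμ : ∀ φ, IsTestFunction Ω φ → (∀ x, 0 ≤ φ x) → Integrable φ μ)
    (h : ∀ φ, IsTestFunction Ω φ → ∫ x, φ x ∂μ = ∫ x, φ x ∂ν)
    {A : Set E} (hAΩ : A ⊆ Ω) (hA : IsOpen A) : μ A ≤ ν A := by
  refine measure_le_of_isCompact_le hA fun K hKA hK => ?_
  obtain ⟨φ, hφ, hφ01, hφK⟩ := exists_isTestFunction_eq_one hK hA hKA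
  calc μ K ≤ ENNReal.ofReal (∫ x, φ x ∂μ) :=
        measure_le_ofReal_integral hK.measurableSet
          (hμ φ (hφ.mono hAΩ) fun x => (hφ01 x).1) (fun x => (hφ01 x).1) hφK
    _ = ENNReal.ofReal (∫ x, φ x ∂ν) := by rw [h φ (hφ.mono hAΩ)]
    _ ≤ ν A := ofReal_integral_le_measure hA.measurableSet
        (fun x => abs_le.2 ⟨by linarith [(hφ01 x).1], (hφ01 x).2⟩)
        fun x hx => hφ.eq_zero_of_notMem hx

lemma integrable_of_integral_isTestFunction_eq [IsFiniteMeasureOnCompacts ν] (hΩ : IsOpen Ω)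
    (hν : ν Ω ≠ 0) (h : ∀ φ, IsTestFunction Ω φ → ∫ x, φ x ∂μ = ∫ x, φ x ∂ν)
    {φ : E → ℝ} (hφ : IsTestFunction Ω φ) (hφ₀ : ∀ x, 0 ≤ φ x) : Integrable φ μ := by
  obtain ⟨K, hKΩ, hK, hνK⟩ : ∃ K ⊆ Ω, IsCompact K ∧ ν K ≠ 0 := by
    by_contra! hK
    exact hν (nonpos_iff_eq_zero.1 (measure_le_of_isCompact_le hΩ fun K hKΩ hKc =>
      (hK K hKΩ hKc).le))
  obtain ⟨ψ, hψ, hψ01, hψK⟩ := exists_isTestFunction_eq_one hK hΩ hKΩ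
  have hψν : 0 < ∫ x, ψ x ∂ν := ENNReal.ofReal_pos.1 <| (pos_iff_ne_zero.2 hνK).trans_le <|
    measure_le_ofReal_integral hK.measurableSet (hψ.integrable ν) (fun x => (hψ01 x).1) hψK
  have hφψ : IsTestFunction Ω (φ + ψ) :=
    ⟨hφ.contDiff.add hψ.contDiff, hφ.hasCompactSupport.add hψ.hasCompactSupport,
      (tsupport_add φ ψ).trans (union_subset hφ.tsupport_subset hψ.tsupport_subset)⟩
  -- A nonzero Bochner integral certifies integrability.
  have hφψμ : Integrable (φ + ψ) μ := .of_integral_ne_zero <| by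
    rw [h _ hφψ]
    simp only [Pi.add_apply]
    rw [integral_add (hφ.integrable ν) (hψ.integrable ν)]
    exact (add_pos_of_nonneg_of_pos (integral_nonneg hφ₀) hψν).ne'
  refine hφψμ.mono' hφ.contDiff.continuous.aestronglyMeasurable (Eventually.of_forall fun x => ?_)
  rw [Real.norm_of_nonneg (hφ₀ x)]
  exact le_add_of_nonneg_right (hψ01 x).1

theorem restrict_eq_of_integral_isTestFunction_eq [IsFiniteMeasureOnCompacts ν] (hΩ : IsOpen Ω)
    (hνΩ : ν Ω ≠ ⊤) (hν : ν Ω ≠ 0)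
    (h : ∀ φ, IsTestFunction Ω φ → ∫ x, φ x ∂μ = ∫ x, φ x ∂ν) :
    μ.restrict Ω = ν.restrict Ω := by
  have hμν : ∀ A ⊆ Ω, IsOpen A → ν A = μ A := fun A hAΩ hA => le_antisymm
    (measure_le_of_integral_isTestFunction_eq (fun φ hφ _ => hφ.integrable ν)
      (fun φ hφ => (h φ hφ).symm) hAΩ hA)
    (measure_le_of_integral_isTestFunction_eq
      (fun φ hφ => integrable_of_integral_isTestFunction_eq hΩ hν h hφ) h hAΩ hA)
  exact (restrict_eq_of_isOpen hΩ hνΩ hμν).symm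

end TestFunctions

section DominatedMeasures

variable {X : Type*} [MeasurableSpace X] {α β σ : Measure X}

lemma rnDeriv_ae_eq_zero_of_measure_eq_zero {s : Set X} (hs : α s = 0) :
    α.rnDeriv σ =ᵐ[σ.restrict s] 0 :=
  (lintegral_eq_zero_iff (Measure.measurable_rnDeriv _ _)).1
    (nonpos_iff_eq_zero.1 ((Measure.setLIntegral_rnDeriv_le s).trans hs.le))

lemma abs_toReal_rnDeriv_sub_le_one [SigmaFinite σ] (hα : α ≤ σ) (hβ : β ≤ σ) :
    ∀ᵐ x ∂σ, |(α.rnDeriv σ x).toReal - (β.rnDeriv σ x).toReal| ≤ 1 := by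
  filter_upwards [Measure.rnDeriv_le_one_of_le hα, Measure.rnDeriv_le_one_of_le hβ] with x hx hx'
  exact abs_sub_le_of_nonneg_of_le ENNReal.toReal_nonneg (ENNReal.toReal_mono ENNReal.one_ne_top hx)
    ENNReal.toReal_nonneg (ENNReal.toReal_mono ENNReal.one_ne_top hx')

theorem ae_eq_toReal_rnDeriv_sub_of_integral_eq {E : Type*} [NormedAddCommGroup E]
    [NormedSpace ℝ E] [FiniteDimensional ℝ E] [MeasurableSpace E] [BorelSpace E]
    {α β σ : Measure E} [IsFiniteMeasure σ] (hα : α ≤ σ) (hβ : β ≤ σ) {n : E → ℝ}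
    (hn : Integrable n σ)
    (h : ∀ φ, IsTestFunction univ φ → ∫ x, n x * φ x ∂σ = ∫ x, φ x ∂α - ∫ x, φ x ∂β) :
    ∀ᵐ x ∂σ, n x = (α.rnDeriv σ x).toReal - (β.rnDeriv σ x).toReal := by
  have := isFiniteMeasure_of_le σ hα
  have := isFiniteMeasure_of_le σ hβ
  refine ae_eq_of_integral_contDiff_smul_eq hn.locallyIntegrable
    (Measure.integrable_toReal_rnDeriv.sub Measure.integrable_toReal_rnDeriv).locallyIntegrable
    fun φ hφ hφc => ?_
  have hφt : IsTestFunction univ φ := ⟨hφ, hφc, subset_univ _⟩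
  have hα' := Measure.absolutelyContinuous_of_le hα
  have hβ' := Measure.absolutelyContinuous_of_le hβ
  calc ∫ x, φ x • n x ∂σ
      = ∫ x, φ x ∂α - ∫ x, φ x ∂β := by simp only [← h φ hφt, smul_eq_mul, mul_comm]
    _ = ∫ x, ((α.rnDeriv σ x).toReal * φ x - (β.rnDeriv σ x).toReal * φ x) ∂σ := by
        rw [integral_sub
          ((integrable_toReal_rnDeriv_mul_iff hα').2 (hφt.integrable α))
          ((integrable_toReal_rnDeriv_mul_iff hβ').2 (hφt.integrable β))]
        congr 1
        exacts [(integral_rnDeriv_smul hα').symm, (integral_rnDeriv_smul hβ').symm]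
    _ = _ := by simp only [smul_eq_mul, mul_sub, mul_comm]

end DominatedMeasures

section TotalVariation

variable {E : Type*} [NormedAddCommGroup E] [InnerProductSpace ℝ E] [FiniteDimensional ℝ E]
  [MeasurableSpace E] [BorelSpace E]

/- The supremum is the total variation of `e • μ`, approached by the fields `-φ • e` with `φ` a
cutoff function. -/
theorem iSup_ofReal_neg_integral_inner_eq_measure {μ : Measure E} [IsFiniteMeasureOnCompacts μ]
    {A : Set E} (hA : IsOpen A) {e : E} (he : ‖e‖ = 1) :
    (⨆ w : {w : E → E // ContDiff ℝ 1 w ∧ HasCompactSupport w ∧ tsupport w ⊆ A ∧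
        ∀ x, ‖w x‖ ≤ 1}, ENNReal.ofReal (-∫ x, ⟪e, w.1 x⟫ ∂μ)) = μ A := by
  refine le_antisymm (iSup_le ?_) (measure_le_of_isCompact_le hA fun K hKA hK => ?_)
  · rintro ⟨w, -, -, hwA, hw⟩
    rw [← integral_neg]
    refine ofReal_integral_le_measure hA.measurableSet (fun x => ?_) fun x hx => ?_
    · rw [abs_neg]
      exact (abs_real_inner_le_norm e (w x)).trans (by simpa [he] using hw x)
    · simp [image_eq_zero_of_notMem_tsupport fun h => hx (hwA h)]
  · obtain ⟨φ, hφ, hφ01, hφK⟩ := exists_isTestFunction_eq_one hK hA hKA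
    have hw : tsupport (fun x => -φ x • e) ⊆ tsupport φ :=
      closure_mono fun x hx h => hx (by simp [h])
    refine le_iSup_of_le ⟨fun x => -φ x • e, hφ.contDiff_one.neg.smul contDiff_const,
      hφ.hasCompactSupport.of_isClosed_subset (isClosed_tsupport _) hw,
      hw.trans hφ.tsupport_subset, fun x => ?_⟩ ?_
    · simpa [norm_smul, he, abs_of_nonneg (hφ01 x).1] using (hφ01 x).2
    · simpa [inner_smul_right, he, integral_neg] using measure_le_ofReal_integral
        hK.measurableSet (hφ.integrable μ) (fun x => (hφ01 x).1) hφK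

end TotalVariation

section Trace

theorem eq_of_tendsto_average_abs_sub {X : Type*} [PseudoMetricSpace X] [MeasurableSpace X]
    [OpensMeasurableSpace X] {μ : Measure X} [μ.IsOpenPosMeasure] [IsLocallyFiniteMeasure μ]
    {Ω : Set X} (hΩ : IsOpen Ω) {p : X} (hp : p ∈ closure Ω) {u : X → ℝ} {a t : ℝ}
    (hu : ∀ᶠ y in 𝓝 p, u y = a)
    (hlim : Tendsto (fun r => (∫ y in Metric.ball p r ∩ Ω, |u y - t| ∂μ) /
      (μ (Metric.ball p r ∩ Ω)).toReal) (𝓝[>] 0) (𝓝 0)) : t = a := by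
  obtain ⟨s, hs, hμs⟩ := μ.finiteAt_nhds p
  obtain ⟨ε, hε, hball⟩ := Metric.mem_nhds_iff.1 (inter_mem hu hs)
  have hconst : ∀ᶠ r in 𝓝[>] (0 : ℝ), (∫ y in Metric.ball p r ∩ Ω, |u y - t| ∂μ) /
      (μ (Metric.ball p r ∩ Ω)).toReal = |a - t| := by
    filter_upwards [Ioo_mem_nhdsGT hε] with r hr
    have hsub : Metric.ball p r ⊆ {y | u y = a} ∩ s :=
      (Metric.ball_subset_ball hr.2.le).trans hball
    have hopen : IsOpen (Metric.ball p r ∩ Ω) := Metric.isOpen_ball.inter hΩ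
    have hpos : μ (Metric.ball p r ∩ Ω) ≠ 0 := (hopen.measure_pos μ
      (mem_closure_iff.1 hp _ Metric.isOpen_ball (Metric.mem_ball_self hr.1))).ne'
    have hfin : μ (Metric.ball p r ∩ Ω) ≠ ⊤ :=
      ((measure_mono fun y hy => (hsub hy.1).2).trans_lt hμs).ne
    rw [setIntegral_congr_fun (g := fun _ => |a - t|) hopen.measurableSet
      fun y hy => by rw [show u y = a from (hsub hy.1).1], setIntegral_const, smul_eq_mul,
      Measure.real, mul_div_cancel_left₀ _ (ENNReal.toReal_ne_zero.2 ⟨hpos, hfin⟩)]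
  have hat : |a - t| = 0 := tendsto_nhds_unique tendsto_const_nhds (hlim.congr' hconst)
  exact (sub_eq_zero.1 (abs_eq_zero.1 hat)).symm

end Trace

section DirectionalDerivatives

variable {E : Type*} [NormedAddCommGroup E] [NormedSpace ℝ E] {g : E → ℝ}

lemma fderiv_eq_zero_of_notMem {A : Set E} (hgA : tsupport g ⊆ A) {p : E} (hp : p ∉ A) :
    fderiv ℝ g p = 0 :=
  image_eq_zero_of_notMem_tsupport fun h => hp (hgA (tsupport_fderiv_subset ℝ h))

variable [MeasurableSpace E] [BorelSpace E] {μ : Measure E} {f : E → ℝ} {C : ℝ}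

lemma integrable_mul_fderiv_apply [IsFiniteMeasureOnCompacts μ]
    (hf : AEStronglyMeasurable f μ) (hfC : ∀ x, |f x| ≤ C) (hg : ContDiff ℝ 1 g)
    (hgc : HasCompactSupport g) (v : E) : Integrable (fun x => f x * fderiv ℝ g x v) μ :=
  (((hg.continuous_fderiv one_ne_zero).clm_apply continuous_const).integrable_of_hasCompactSupport
    (hgc.fderiv_apply ℝ v)).bdd_mul hf (Eventually.of_forall hfC)

theorem integral_mul_fderiv_apply_eq_zero [FiniteDimensional ℝ E] [μ.IsAddHaarMeasure]
    (hf : AEStronglyMeasurable f μ) (hfC : ∀ x, |f x| ≤ C) {v : E}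
    (hfv : ∀ x (t : ℝ), f (x + t • v) = f x) (hg : ContDiff ℝ 1 g) (hgc : HasCompactSupport g) :
    ∫ x, f x * fderiv ℝ g x v ∂μ = 0 := by
  have hparts := integral_bilinear_hasLineDerivAt_right_eq_neg_left_of_integrable (μ := μ)
    (f := f) (f' := 0) (g := g) (g' := fun x => fderiv ℝ g x v) (v := v)
    (B := ContinuousLinearMap.mul ℝ ℝ) (by simp)
    (integrable_mul_fderiv_apply hf hfC hg hgc v)
    ((hg.continuous.integrable_of_hasCompactSupport hgc).bdd_mul hf (Eventually.of_forall hfC))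
    (fun x _ => by
      simp only [HasLineDerivAt, hfv]
      exact hasDerivAt_const 0 (f x))
    (fun x _ => (hg.differentiable one_ne_zero x).hasFDerivAt.hasLineDerivAt v)
  simpa using hparts

end DirectionalDerivatives

section Coordinates

/-- The identification of `ℝ × ℝ` with the Euclidean plane, `(x, y) ↦ !₂[x, y]`. -/
noncomputable def ofCoords : (ℝ × ℝ) ≃L[ℝ] E2 :=
  (ContinuousLinearEquiv.finTwoArrow ℝ ℝ).symm.trans
    (PiLp.continuousLinearEquiv 2 ℝ fun _ : Fin 2 => ℝ).symm

@[simp] lemma ofCoords_apply_zero (q : ℝ × ℝ) : ofCoords q 0 = q.1 := rfl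

@[simp] lemma ofCoords_apply_one (q : ℝ × ℝ) : ofCoords q 1 = q.2 := rfl

lemma ofCoords_zero_one : ofCoords (0, 1) = EuclideanSpace.single 1 1 := by
  ext i; fin_cases i <;> simp

lemma norm_sq_eq_add_sq (p : E2) : ‖p‖ ^ 2 = p 0 ^ 2 + p 1 ^ 2 := by
  simp [EuclideanSpace.norm_sq_eq]

lemma mem_ball_zero_one_iff (p : E2) : p ∈ Metric.ball 0 1 ↔ p 0 ^ 2 + p 1 ^ 2 < 1 := by
  rw [mem_ball_zero_iff, ← norm_sq_eq_add_sq, sq_lt_one_iff₀ (norm_nonneg p)]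

lemma mem_sphere_zero_one_iff (p : E2) : p ∈ Metric.sphere 0 1 ↔ p 0 ^ 2 + p 1 ^ 2 = 1 := by
  rw [mem_sphere_zero_iff_norm, ← norm_sq_eq_add_sq,
    pow_eq_one_iff_of_nonneg (norm_nonneg p) two_ne_zero]

lemma measurePreserving_ofCoords : MeasurePreserving ofCoords :=
  (PiLp.volume_preserving_toLp (Fin 2)).comp (volume_preserving_finTwoArrow ℝ).symm

lemma measurableEmbedding_ofCoords : MeasurableEmbedding ofCoords :=
  ofCoords.toHomeomorph.measurableEmbedding

lemma integral_eq_integral_integral_ofCoords {F : E2 → ℝ} (hF : Integrable F) :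
    ∫ p, F p = ∫ x, ∫ y, F (ofCoords (x, y)) := by
  rw [← measurePreserving_ofCoords.integral_comp measurableEmbedding_ofCoords]
  exact integral_prod (F ∘ ofCoords)
    ((measurePreserving_ofCoords.integrable_comp_emb measurableEmbedding_ofCoords).2 hF)

lemma hasDerivAt_comp_ofCoords {g : E2 → ℝ} (hg : Differentiable ℝ g) (x y : ℝ) :
    HasDerivAt (fun t => g (ofCoords (x, t)))
      (fderiv ℝ g (ofCoords (x, y)) (EuclideanSpace.single 1 1)) y := by
  have hline : HasDerivAt (fun t : ℝ => ofCoords (x, t)) (EuclideanSpace.single 1 1) y := by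
    rw [← ofCoords_zero_one]
    exact ofCoords.hasFDerivAt.comp_hasDerivAt y ((hasDerivAt_const y x).prodMk (hasDerivAt_id y))
  exact (hg _).hasFDerivAt.comp_hasDerivAt y hline

lemma isClosedEmbedding_ofCoords_mk (x : ℝ) :
    Topology.IsClosedEmbedding fun y => ofCoords (x, y) :=
  Function.LeftInverse.isClosedEmbedding (f := fun p : E2 => p 1) (fun _ => rfl)
    (by fun_prop) (by fun_prop)

end Coordinates

section Layers

/-- `HasDistribDeriv U m` says that the derivative of `U` in `𝒟'(ℝ)` is the measure `m`. -/
def HasDistribDeriv (U : ℝ → ℝ) (m : Measure ℝ) : Prop :=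
  ∀ k : ℝ → ℝ, ContDiff ℝ 1 k → HasCompactSupport k → ∫ y, U y * deriv k y = -∫ y, k y ∂m

/-- The derivative with respect to `y`, in the sense of distributions on the plane, of a function
of `y` alone whose derivative on the line is `m`. -/
noncomputable def layerMeasure (m : Measure ℝ) : Measure E2 :=
  ((volume : Measure ℝ).prod m).map ofCoords

variable {m : Measure ℝ} {h U : ℝ → ℝ} {C D : ℝ}

lemma ae_layerMeasure_of_ae {P : ℝ → Prop} (hP : ∀ᵐ y ∂m, P y) :
    ∀ᵐ p ∂layerMeasure m, P (p 1) :=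
  measurableEmbedding_ofCoords.ae_map_iff.2 (Measure.quasiMeasurePreserving_snd.ae hP)

variable [IsFiniteMeasure m]

instance : IsFiniteMeasureOnCompacts (layerMeasure m) :=
  Measure.IsFiniteMeasureOnCompacts.map _ ofCoords.toHomeomorph

lemma integral_layerMeasure {F : E2 → ℝ} (hF : Integrable F (layerMeasure m)) :
    ∫ p, F p ∂layerMeasure m = ∫ x, ∫ y, F (ofCoords (x, y)) ∂m := by
  rw [layerMeasure, measurableEmbedding_ofCoords.integral_map]
  exact integral_prod (F ∘ ofCoords) (measurableEmbedding_ofCoords.integrable_map_iff.1 hF)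

lemma measurable_comp_coord (hh : Measurable h) (i : Fin 2) : Measurable fun p : E2 => h (p i) :=
  hh.comp (by fun_prop : Continuous fun p : E2 => p i).measurable

theorem integral_mul_fderiv_single_one_eq_neg_layerMeasure (hUm : HasDistribDeriv U m)
    (hh : Measurable h) (hhC : ∀ x, |h x| ≤ C) (hU : Measurable U) (hUD : ∀ y, |U y| ≤ D)
    {g : E2 → ℝ} (hg : ContDiff ℝ 1 g) (hgc : HasCompactSupport g) :
    ∫ p : E2, h (p 0) * U (p 1) * fderiv ℝ g p (EuclideanSpace.single 1 1)
      = -∫ p, h (p 0) * g p ∂layerMeasure m := by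
  have hslice : ∀ x, ∫ y, U y * fderiv ℝ g (ofCoords (x, y)) (EuclideanSpace.single 1 1)
      = -∫ y, g (ofCoords (x, y)) ∂m := fun x => by
    have hx := hUm (fun y => g (ofCoords (x, y))) (hg.comp (by fun_prop))
      (hgc.comp_isClosedEmbedding (isClosedEmbedding_ofCoords_mk x))
    simpa only [(hasDerivAt_comp_ofCoords (hg.differentiable one_ne_zero) x _).deriv] using hx
  rw [integral_eq_integral_integral_ofCoords, integral_layerMeasure, ← integral_neg]
  · simp only [ofCoords_apply_zero, ofCoords_apply_one, mul_assoc, integral_const_mul, hslice,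
      mul_neg]
  · exact (hg.continuous.integrable_of_hasCompactSupport hgc).bdd_mul
      (measurable_comp_coord hh 0).aestronglyMeasurable (Eventually.of_forall fun _ => hhC _)
  · refine integrable_mul_fderiv_apply ((measurable_comp_coord hh 0).mul
      (measurable_comp_coord hU 1)).aestronglyMeasurable (C := C * D) (fun p => ?_) hg hgc _
    rw [Pi.mul_apply, abs_mul]
    exact mul_le_mul (hhC _) (hUD _) (abs_nonneg _) ((abs_nonneg _).trans (hhC 0))

lemma div2_eq_fderiv_coord {w : E2 → E2} {p : E2} (hw : DifferentiableAt ℝ w p) :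
    div2 w p = fderiv ℝ (fun q => w q 0) p (EuclideanSpace.single 0 1)
      + fderiv ℝ (fun q => w q 1) p (EuclideanSpace.single 1 1) := by
  have hcoord (i : Fin 2) (e : E2) : fderiv ℝ (fun q => w q i) p e = fderiv ℝ w p e i :=
    DFunLike.congr_fun
      ((EuclideanSpace.proj (𝕜 := ℝ) i).hasFDerivAt.comp p hw.hasFDerivAt).fderiv e
  rw [div2, Fin.sum_univ_two, hcoord, hcoord]

theorem integral_mul_div2_eq_neg_layerMeasure (hUm : HasDistribDeriv U m) (hU : Measurable U)
    (hUC : ∀ y, |U y| ≤ C) {w : E2 → E2} (hw : ContDiff ℝ 1 w) (hwc : HasCompactSupport w) :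
    ∫ p, U (p 1) * div2 w p = -∫ p, w p 1 ∂layerMeasure m := by
  have hwi (i : Fin 2) : ContDiff ℝ 1 fun q => w q i :=
    (EuclideanSpace.proj (𝕜 := ℝ) i).contDiff.comp hw
  have hwci (i : Fin 2) : HasCompactSupport fun q => w q i :=
    hwc.comp_left (g := fun v : E2 => v i) rfl
  have hUp : AEStronglyMeasurable (fun p : E2 => U (p 1)) :=
    (measurable_comp_coord hU 1).aestronglyMeasurable
  have hx : ∫ p : E2, U (p 1) * fderiv ℝ (fun q => w q 0) p (EuclideanSpace.single 0 1) = 0 :=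
    integral_mul_fderiv_apply_eq_zero hUp (fun _ => hUC _) (by simp) (hwi 0) (hwci 0)
  have hy := integral_mul_fderiv_single_one_eq_neg_layerMeasure (h := 1) hUm measurable_one
    (fun _ => abs_one.le) hU hUC (hwi 1) (hwci 1)
  simp only [Pi.one_apply, one_mul] at hy
  simp only [div2_eq_fderiv_coord (hw.differentiable one_ne_zero _), mul_add]
  rw [integral_add (integrable_mul_fderiv_apply hUp (fun _ => hUC _) (hwi 0) (hwci 0) _)
    (integrable_mul_fderiv_apply hUp (fun _ => hUC _) (hwi 1) (hwci 1) _), hx, hy, zero_add]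

theorem iSup_ofReal_integral_mul_div2_eq_layerMeasure (hUm : HasDistribDeriv U m)
    (hU : Measurable U) (hUC : ∀ y, |U y| ≤ C) {A : Set E2} (hA : IsOpen A) :
    (⨆ w : {w : E2 → E2 // ContDiff ℝ 1 w ∧ HasCompactSupport w ∧ tsupport w ⊆ A ∧
        ∀ x, ‖w x‖ ≤ 1}, ENNReal.ofReal (∫ p in A, U (p 1) * div2 w.1 p)) = layerMeasure m A := by
  rw [← iSup_ofReal_neg_integral_inner_eq_measure hA
    (e := EuclideanSpace.single (1 : Fin 2) (1 : ℝ)) (by simp)]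
  refine iSup_congr fun ⟨w, hw, hwc, hwA, _⟩ => ?_
  have hdiv : ∀ p ∉ A, U (p 1) * div2 w p = 0 := fun p hp => by
    simp [div2, image_eq_zero_of_notMem_tsupport fun h => hp (hwA (tsupport_fderiv_subset ℝ h))]
  simp [setIntegral_eq_integral_of_forall_compl_eq_zero hdiv,
    integral_mul_div2_eq_neg_layerMeasure hUm hU hUC hw hwc, EuclideanSpace.inner_single_left]

end Layers

section StepProfile

variable {c lam : ℝ}

/-- The profile of `u_λ` across the strips: `0`, `lam`, `1` below, between and above `±c`. -/
noncomputable def stepProfile (c lam y : ℝ) : ℝ := if y < -c then 0 else if y ≤ c then lam else 1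

/-- The derivative of `stepProfile c lam`, with its jumps `lam` at `-c` and `1 - lam` at `c`. -/
noncomputable def jumpMeasure (c lam : ℝ) : Measure ℝ :=
  ENNReal.ofReal lam • Measure.dirac (-c) + ENNReal.ofReal (1 - lam) • Measure.dirac c

instance : IsFiniteMeasure (jumpMeasure c lam) := by
  have hsmul (t y : ℝ) : IsFiniteMeasure (ENNReal.ofReal t • Measure.dirac y) :=
    Measure.smul_finite _ ENNReal.ofReal_ne_top
  exact isFiniteMeasureAdd

lemma measurable_stepProfile : Measurable (stepProfile c lam) :=
  .ite measurableSet_Iio measurable_const (.ite measurableSet_Iic measurable_const measurable_const)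

lemma abs_stepProfile_le_one (hlam : lam ∈ Icc (0 : ℝ) 1) (y : ℝ) : |stepProfile c lam y| ≤ 1 := by
  unfold stepProfile
  split_ifs <;> simp [abs_of_nonneg, hlam.1, hlam.2]

lemma eventually_stepProfile_eq (hc : 0 < c) {y : ℝ} (hy : c < |y|) :
    ∀ᶠ t in 𝓝 y, stepProfile c lam t = if 0 < y then 1 else 0 := by
  rcases lt_abs.1 hy with hy | hy
  · filter_upwards [Ioi_mem_nhds hy] with t (ht : c < t)
    rw [stepProfile, if_neg (by linarith), if_neg ht.not_ge, if_pos (hc.trans hy)]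
  · filter_upwards [Iio_mem_nhds (lt_neg.1 hy)] with t (ht : t < -c)
    rw [stepProfile, if_pos ht, if_neg (by linarith)]

lemma ae_jumpMeasure_sq_eq : ∀ᵐ y ∂jumpMeasure c lam, y ^ 2 = c ^ 2 := by
  refine ae_add_measure_iff.2 ⟨Measure.ae_smul_measure ?_ _, Measure.ae_smul_measure ?_ _⟩ <;>
    simp [ae_dirac_eq]

lemma jumpMeasure_univ (hlam : lam ∈ Icc (0 : ℝ) 1) : jumpMeasure c lam univ = 1 := by
  simp [jumpMeasure, ← ENNReal.ofReal_add hlam.1 (sub_nonneg.2 hlam.2)]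

lemma stepProfile_mul (hc : 0 < c) (k : ℝ → ℝ) (y : ℝ) : stepProfile c lam y * k y
    = lam * (Ici (-c)).indicator k y + (1 - lam) * (Ioi c).indicator k y := by
  simp only [stepProfile, indicator, mem_Ici, mem_Ioi]
  split_ifs <;> first | ring1 | linarith

theorem hasDistribDeriv_stepProfile (hc : 0 < c) (hlam : lam ∈ Icc (0 : ℝ) 1) :
    HasDistribDeriv (stepProfile c lam) (jumpMeasure c lam) := by
  intro k hk hkc
  have hk' : Integrable (deriv k) :=
    (hk.continuous_deriv le_rfl).integrable_of_hasCompactSupport hkc.deriv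
  have hjump : ∫ y, k y ∂jumpMeasure c lam = lam * k (-c) + (1 - lam) * k c := by
    have hkd (t y : ℝ) : Integrable k (ENNReal.ofReal t • Measure.dirac y) :=
      (hk.continuous.integrable_of_hasCompactSupport hkc).smul_measure ENNReal.ofReal_ne_top
    rw [jumpMeasure, integral_add_measure (hkd _ _) (hkd _ _)]
    simp [hlam.1, hlam.2]
  simp only [stepProfile_mul hc]
  rw [integral_add ((hk'.indicator measurableSet_Ici).const_mul _)
      ((hk'.indicator measurableSet_Ioi).const_mul _), integral_const_mul, integral_const_mul,
    integral_indicator measurableSet_Ici, integral_indicator measurableSet_Ioi,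
    integral_Ici_eq_integral_Ioi, hkc.integral_Ioi_deriv_eq hk, hkc.integral_Ioi_deriv_eq hk,
    hjump]
  ring

theorem trace_stepProfile_eq (hc : 0 < c) {p : E2} (hp : p ∈ Metric.sphere 0 1) (hpc : c < |p 1|)
    {t : ℝ} (hlim : Tendsto (fun r =>
      (∫ q in Metric.ball p r ∩ Metric.ball 0 1, |stepProfile c lam (q 1) - t|) /
        (volume (Metric.ball p r ∩ Metric.ball 0 1)).toReal) (𝓝[>] 0) (𝓝 0)) :
    t = if 0 < p 1 then 1 else 0 := by
  have hcoord : Continuous fun q : E2 => q 1 := by fun_prop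
  refine eq_of_tendsto_average_abs_sub Metric.isOpen_ball ?_
    (hcoord.continuousAt.eventually (eventually_stepProfile_eq hc hpc)) hlim
  rw [closure_ball 0 one_ne_zero]
  exact Metric.sphere_subset_closedBall hp

end StepProfile

section ColumnField

variable {c lam : ℝ}

/-- The field `z` of the theorem: the vertical unit vector on the column `|x| < c`, else `0`. -/
noncomputable def columnField (c : ℝ) (p : E2) : E2 :=
  if |p 0| < c then EuclideanSpace.single 1 1 else 0

lemma norm_columnField_le_one (p : E2) : ‖columnField c p‖ ≤ 1 := by
  unfold columnField
  split_ifs <;> simp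

lemma inner_columnField_gradient (v : E2 → ℝ) (p : E2) : ⟪columnField c p, gradient v p⟫
    = (Ioo (-c) c).indicator 1 (p 0) * fderiv ℝ v p (EuclideanSpace.single 1 1) := by
  rw [inner_gradient_right]
  simp only [columnField, indicator, mem_Ioo, ← abs_lt]
  split_ifs <;> simp

lemma measurable_indicator_Ioo : Measurable ((Ioo (-c) c).indicator (1 : ℝ → ℝ)) :=
  measurable_one.indicator measurableSet_Ioo

lemma abs_indicator_Ioo_le_one (x : ℝ) : |(Ioo (-c) c).indicator (1 : ℝ → ℝ) x| ≤ 1 := by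
  unfold indicator
  split_ifs <;> simp

theorem divFreeOn_columnField (Ω : Set E2) : DivFreeOn Ω (columnField c) := by
  intro φ hφ hφc hφΩ
  rw [setIntegral_eq_integral_of_forall_compl_eq_zero fun p hp => by
    simp [fderiv_eq_zero_of_notMem hφΩ hp]]
  simp only [inner_columnField_gradient]
  exact integral_mul_fderiv_apply_eq_zero
    (measurable_comp_coord measurable_indicator_Ioo 0).aestronglyMeasurable
    (fun _ => abs_indicator_Ioo_le_one _) (by simp) (hφ.of_le (mod_cast le_top)) hφc

/- The lines `y = ±c` meet the disk only inside the column, where `z` is the unit normal. -/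
lemma ae_indicator_mul_eq_of_isTestFunction (hc : 1 ≤ 2 * c ^ 2) (hc₀ : 0 < c) {φ : E2 → ℝ}
    (hφ : IsTestFunction (Metric.ball 0 1) φ) : ∀ᵐ p ∂layerMeasure (jumpMeasure c lam),
      (Ioo (-c) c).indicator 1 (p 0) * φ p = φ p := by
  filter_upwards [ae_layerMeasure_of_ae ae_jumpMeasure_sq_eq] with p hp
  by_cases hpΩ : p ∈ Metric.ball (0 : E2) 1
  · rw [mem_ball_zero_one_iff] at hpΩ
    have hcol : p 0 ∈ Ioo (-c) c := abs_lt.1 (abs_lt_of_sq_lt_sq (by linarith) hc₀.le)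
    simp [hcol]
  · simp [hφ.eq_zero_of_notMem hpΩ]

theorem integral_layerMeasure_eq_neg_setIntegral_inner (hc : 1 ≤ 2 * c ^ 2) (hc₀ : 0 < c)
    (hlam : lam ∈ Icc (0 : ℝ) 1) {φ : E2 → ℝ} (hφ : IsTestFunction (Metric.ball 0 1) φ) :
    ∫ p, φ p ∂layerMeasure (jumpMeasure c lam)
      = -∫ p in Metric.ball 0 1, stepProfile c lam (p 1) * ⟪columnField c p, gradient φ p⟫ := by
  rw [setIntegral_eq_integral_of_forall_compl_eq_zero fun p hp => by
    simp [fderiv_eq_zero_of_notMem hφ.tsupport_subset hp]]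
  have hinner (p : E2) : stepProfile c lam (p 1) * ⟪columnField c p, gradient φ p⟫
      = (Ioo (-c) c).indicator 1 (p 0) * stepProfile c lam (p 1)
        * fderiv ℝ φ p (EuclideanSpace.single 1 1) := by
    rw [inner_columnField_gradient]
    ring
  simp only [hinner]
  rw [integral_mul_fderiv_single_one_eq_neg_layerMeasure (hasDistribDeriv_stepProfile hc₀ hlam)
    measurable_indicator_Ioo abs_indicator_Ioo_le_one measurable_stepProfile
    (abs_stepProfile_le_one hlam) hφ.contDiff_one hφ.hasCompactSupport, neg_neg]
  exact (integral_congr_ae (ae_indicator_mul_eq_of_isTestFunction hc hc₀ hφ)).symm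

lemma layerMeasure_ball_ne_zero (hc : 2 * c ^ 2 ≤ 1) (hc₀ : 0 < c) (hlam : lam ∈ Icc (0 : ℝ) 1) :
    layerMeasure (jumpMeasure c lam) (Metric.ball 0 1) ≠ 0 := by
  have hsub : Ioo (-c) c ×ˢ {y | y ^ 2 = c ^ 2} ⊆ ofCoords ⁻¹' Metric.ball 0 1 := by
    rintro ⟨x, y⟩ ⟨hx, hy⟩
    have hxc : x ^ 2 < c ^ 2 := sq_lt_sq' hx.1 hx.2
    have hyc : y ^ 2 = c ^ 2 := hy
    rw [mem_preimage, mem_ball_zero_one_iff, ofCoords_apply_zero, ofCoords_apply_one]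
    linarith
  have hline : jumpMeasure c lam {y | y ^ 2 = c ^ 2} = 1 := by
    rw [measure_congr (eventuallyEq_univ.2 ae_jumpMeasure_sq_eq), jumpMeasure_univ hlam]
  rw [layerMeasure, measurableEmbedding_ofCoords.map_apply]
  refine (lt_of_lt_of_le ?_ (measure_mono hsub)).ne'
  rw [Measure.prod_prod, hline, mul_one]
  exact isOpen_Ioo.measure_pos _ (nonempty_Ioo.2 (by linarith))

theorem restrict_ball_eq_layerMeasure (hc : 2 * c ^ 2 = 1) (hc₀ : 0 < c)
    (hlam : lam ∈ Icc (0 : ℝ) 1) {π : Measure E2}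
    (hπ : ∀ φ, IsTestFunction (Metric.ball 0 1) φ → ∫ p, φ p ∂π
      = -∫ p in Metric.ball 0 1, stepProfile c lam (p 1) * ⟪columnField c p, gradient φ p⟫) :
    π.restrict (Metric.ball 0 1)
      = (layerMeasure (jumpMeasure c lam)).restrict (Metric.ball 0 1) :=
  restrict_eq_of_integral_isTestFunction_eq Metric.isOpen_ball measure_ball_lt_top.ne
    (layerMeasure_ball_ne_zero hc.le hc₀ hlam) fun φ hφ => by
      rw [hπ φ hφ, integral_layerMeasure_eq_neg_setIntegral_inner hc.ge hc₀ hlam hφ]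

/-- `τ` is the total variation measure `|Du|` of `u` in `Ω`, given by the usual supremum over test
fields on the open subsets of `Ω`. -/
def IsTotalVariation (Ω : Set E2) (u : E2 → ℝ) (τ : Measure E2) : Prop :=
  ∀ A : Set E2, IsOpen A → A ⊆ Ω → τ A = ⨆ w : {w : E2 → E2 // ContDiff ℝ 1 w ∧
    HasCompactSupport w ∧ tsupport w ⊆ A ∧ ∀ x, ‖w x‖ ≤ 1},
      ENNReal.ofReal (∫ x in A, u x * div2 w.1 x)

theorem IsTotalVariation.restrict_ball_eq_layerMeasure {τ : Measure E2} (hc₀ : 0 < c)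
    (hlam : lam ∈ Icc (0 : ℝ) 1)
    (hτ : IsTotalVariation (Metric.ball 0 1) (fun p => stepProfile c lam (p 1)) τ) :
    τ.restrict (Metric.ball 0 1)
      = (layerMeasure (jumpMeasure c lam)).restrict (Metric.ball 0 1) := by
  have hopen (A : Set E2) (hA : A ⊆ Metric.ball 0 1) (hAo : IsOpen A) :
      τ A = layerMeasure (jumpMeasure c lam) A := by
    rw [hτ A hAo hA, iSup_ofReal_integral_mul_div2_eq_layerMeasure
      (hasDistribDeriv_stepProfile hc₀ hlam) measurable_stepProfile
      (abs_stepProfile_le_one hlam) hAo]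
  refine restrict_eq_of_isOpen Metric.isOpen_ball ?_ hopen
  rw [hopen _ Subset.rfl Metric.isOpen_ball]
  exact measure_ball_lt_top.ne

end ColumnField

section Arcs

/-- The image of Lebesgue measure on `s` under `x ↦ (x, g x)`, a measure on the graph of `g`. -/
noncomputable def graphMeasure (s : Set ℝ) (g : ℝ → ℝ) : Measure E2 :=
  (volume.restrict s).map fun x => ofCoords (x, g x)

/-- The measure `dx` on the part over `|x| < c` of the upper (`ε = 1`) or lower (`ε = -1`) unit
semicircle. -/
noncomputable def arcMeasure (c ε : ℝ) : Measure E2 :=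
  graphMeasure (Ioo (-c) c) fun x => ε * √(1 - x ^ 2)

variable {s : Set ℝ} {g : ℝ → ℝ} {c ε : ℝ}

lemma measurable_ofCoords_graph (hg : Measurable g) : Measurable fun x => ofCoords (x, g x) :=
  ofCoords.continuous.measurable.comp (measurable_id.prodMk hg)

/- Projecting the graph onto the horizontal axis does not increase length. -/
theorem graphMeasure_le_hausdorffMeasure_restrict (hg : Measurable g) {T : Set E2}
    (hT : ∀ x ∈ s, ofCoords (x, g x) ∈ T) : graphMeasure s g ≤ μH[1].restrict T := by
  have hgraph := measurable_ofCoords_graph hg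
  have hproj : AntilipschitzWith 1 fun x => ofCoords (x, g x) :=
    AntilipschitzWith.of_le_mul_dist fun x x' => by
      simpa [dist_eq_norm] using PiLp.norm_apply_le (ofCoords (x, g x) - ofCoords (x', g x')) 0
  refine Measure.le_iff.2 fun B hB => ?_
  rw [graphMeasure, Measure.map_apply hgraph hB, Measure.restrict_apply (hgraph hB),
    Measure.restrict_apply hB, ← hausdorffMeasure_real]
  refine (hproj.le_hausdorffMeasure_image zero_le_one _).trans ?_
  rw [ENNReal.coe_one, ENNReal.one_rpow, one_mul]
  refine measure_mono ?_
  rintro - ⟨x, ⟨hxB, hxs⟩, rfl⟩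
  exact ⟨hxB, hT x hxs⟩

lemma graphMeasure_eq_zero (hg : Measurable g) {B : Set E2} (hB : MeasurableSet B)
    (h : ∀ x ∈ s, ofCoords (x, g x) ∉ B) : graphMeasure s g B = 0 := by
  have hgraph := measurable_ofCoords_graph hg
  have hempty : (fun x => ofCoords (x, g x)) ⁻¹' B ∩ s = ∅ :=
    eq_empty_of_forall_notMem fun x hx => h x hx.2 hx.1
  rw [graphMeasure, Measure.map_apply hgraph hB, Measure.restrict_apply (hgraph hB), hempty,
    measure_empty]

lemma measurable_arc : Measurable fun x : ℝ => ε * √(1 - x ^ 2) := by fun_prop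

lemma sq_arc (hε : ε ^ 2 = 1) {x : ℝ} (hx : x ^ 2 ≤ 1) : (ε * √(1 - x ^ 2)) ^ 2 = 1 - x ^ 2 := by
  rw [mul_pow, hε, one_mul, Real.sq_sqrt (sub_nonneg.2 hx)]

lemma arcMeasure_le_hausdorffMeasure (hc : c ^ 2 ≤ 1) (hε : ε ^ 2 = 1) :
    arcMeasure c ε ≤ μH[1].restrict (Metric.sphere 0 1) :=
  graphMeasure_le_hausdorffMeasure_restrict measurable_arc fun x hx => by
    have hx' : x ^ 2 < c ^ 2 := sq_lt_sq' hx.1 hx.2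
    rw [mem_sphere_zero_one_iff, ofCoords_apply_zero, ofCoords_apply_one,
      sq_arc hε (by linarith), add_sub_cancel]

lemma arcMeasure_abs_le_eq_zero (hc : 2 * c ^ 2 ≤ 1) (hε : ε ^ 2 = 1) :
    arcMeasure c ε {p | |p 1| ≤ c} = 0 :=
  graphMeasure_eq_zero measurable_arc
    (isClosed_le (by fun_prop) continuous_const).measurableSet fun x hx hxc => by
    have hx' : x ^ 2 < c ^ 2 := sq_lt_sq' hx.1 hx.2
    have hy : (ε * √(1 - x ^ 2)) ^ 2 ≤ c ^ 2 := sq_le_sq' (abs_le.1 hxc).1 (abs_le.1 hxc).2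
    rw [sq_arc hε (by linarith)] at hy
    linarith

lemma integral_arcMeasure {v : E2 → ℝ} (hv : Continuous v) : ∫ p, v p ∂arcMeasure c ε
    = ∫ x in Ioo (-c) c, v (ofCoords (x, ε * √(1 - x ^ 2))) :=
  integral_map (measurable_ofCoords_graph measurable_arc).aemeasurable hv.aestronglyMeasurable

lemma integrableOn_arc {v : E2 → ℝ} (hv : Continuous v) :
    IntegrableOn (fun x => v (ofCoords (x, ε * √(1 - x ^ 2)))) (Ioo (-c) c) :=
  (Continuous.continuousOn (by fun_prop)).integrableOn_compact isCompact_Icc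
    |>.mono_set Ioo_subset_Icc_self

instance : IsFiniteMeasure (μH[1].restrict (Metric.sphere (0 : E2) 1)) := by
  have hcircle : μH[1] (Metric.sphere (0 : ℂ) 1) < ⊤ := by
    have himage := image_circleMap_Ioc 0 1
    rw [abs_one] at himage
    rw [← himage]
    refine ((lipschitzWith_circleMap 0 1).hausdorffMeasure_image_le zero_le_one _).trans_lt ?_
    rw [hausdorffMeasure_real, Real.volume_Ioc]
    exact ENNReal.mul_lt_top (by simp) ENNReal.ofReal_lt_top
  have hsphere := Complex.orthonormalBasisOneI.repr.image_sphere 0 1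
  rw [map_zero] at hsphere
  rwa [isFiniteMeasure_restrict, ← lt_top_iff_ne_top, ← hsphere,
    Complex.orthonormalBasisOneI.repr.isometry.hausdorffMeasure_image (Or.inl zero_le_one)]

end Arcs

section NormalTrace

/-- `n` is the normal trace `[z, ν]` with respect to the boundary measure `σ` of a field `z` which
is divergence-free in `Ω`, in the sense of Anzellotti's Green formula. -/
def IsNormalTrace (Ω : Set E2) (z : E2 → E2) (σ : Measure E2) (n : E2 → ℝ) : Prop :=
  ∀ v : E2 → ℝ, ContDiff ℝ 1 v → ∫ x in Ω, ⟪z x, gradient v x⟫ = ∫ x, n x * v x ∂σ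

lemma integrable_of_integral_mul_ne_zero {X : Type*} [MeasurableSpace X] {μ : Measure X}
    {n v : X → ℝ} (h : ∫ x, n x * v x ∂μ ≠ 0) (h' : ∫ x, n x * (v x + 1) ∂μ ≠ 0) :
    Integrable n μ := by
  refine ((Integrable.of_integral_ne_zero h').sub (.of_integral_ne_zero h)).congr (.of_forall ?_)
  intro x
  simp only [Pi.sub_apply]
  ring

variable {c : ℝ} {v : E2 → ℝ}

lemma ofCoords_mem_ball_iff (x y : ℝ) : ofCoords (x, y) ∈ Metric.ball 0 1
    ↔ y ∈ Ioo (-√(1 - x ^ 2)) (√(1 - x ^ 2)) := by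
  rw [mem_ball_zero_one_iff, mem_Ioo, ← Real.sq_lt, lt_sub_iff_add_lt']
  rfl

lemma integral_Ioo_fderiv_single_one (hv : ContDiff ℝ 1 v) {a b : ℝ} (hab : a ≤ b) (x : ℝ) :
    ∫ y in Ioo a b, fderiv ℝ v (ofCoords (x, y)) (EuclideanSpace.single 1 1)
      = v (ofCoords (x, b)) - v (ofCoords (x, a)) := by
  rw [← integral_Ioc_eq_integral_Ioo, ← intervalIntegral.integral_of_le hab]
  refine intervalIntegral.integral_eq_sub_of_hasDerivAt (f := fun y => v (ofCoords (x, y)))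
    (fun y _ => hasDerivAt_comp_ofCoords (hv.differentiable one_ne_zero) x y)
    (Continuous.intervalIntegrable ?_ _ _)
  have := hv.continuous_fderiv one_ne_zero
  fun_prop

theorem setIntegral_inner_columnField_eq_sub (hv : ContDiff ℝ 1 v) :
    ∫ p in Metric.ball 0 1, ⟪columnField c p, gradient v p⟫
      = ∫ p, v p ∂arcMeasure c 1 - ∫ p, v p ∂arcMeasure c (-1) := by
  have hintegrable : IntegrableOn (fun p : E2 => (Ioo (-c) c).indicator 1 (p 0)
      * fderiv ℝ v p (EuclideanSpace.single 1 1)) (Metric.ball 0 1) := by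
    refine Integrable.bdd_mul ?_
      (measurable_comp_coord measurable_indicator_Ioo 0).aestronglyMeasurable
      (.of_forall fun _ => abs_indicator_Ioo_le_one _)
    exact ((hv.continuous_fderiv one_ne_zero).clm_apply continuous_const).continuousOn
      |>.integrableOn_compact (isCompact_closedBall 0 1) |>.mono_set Metric.ball_subset_closedBall
  simp only [inner_columnField_gradient]
  rw [integral_arcMeasure hv.continuous, integral_arcMeasure hv.continuous,
    ← integral_sub (integrableOn_arc hv.continuous) (integrableOn_arc hv.continuous),
    ← integral_indicator measurableSet_ball,
    integral_eq_integral_integral_ofCoords (hintegrable.integrable_indicator measurableSet_ball),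
    ← integral_indicator measurableSet_Ioo]
  congr 1 with x
  by_cases hx : x ∈ Ioo (-c) c
  · rw [indicator_of_mem hx, one_mul, neg_one_mul, ← integral_Ioo_fderiv_single_one hv
      (neg_le_self (Real.sqrt_nonneg _)), ← integral_indicator measurableSet_Ioo]
    simp only [indicator, ofCoords_mem_ball_iff, ofCoords_apply_zero, hx, if_true, Pi.one_apply,
      one_mul]
  · simp [hx, indicator]

variable {σ : Measure E2} {n : E2 → ℝ}

/- Green's formula with the test functions `y` and `y + 1`: both integrals are nonzero, so neither
can be the junk value of a non-integrable function. -/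
lemma IsNormalTrace.integrable (hc : c ^ 2 ≤ 1) (hc₀ : 0 < c)
    (hn : IsNormalTrace (Metric.ball 0 1) (columnField c) σ n) : Integrable n σ := by
  have hflux (a : ℝ) : 0 < ∫ p : E2, n p * (p 1 + a) ∂σ := by
    have hv : ContDiff ℝ 1 fun p : E2 => p 1 + a := by fun_prop
    rw [← hn _ hv, setIntegral_inner_columnField_eq_sub hv, integral_arcMeasure hv.continuous,
      integral_arcMeasure hv.continuous, ← integral_sub (integrableOn_arc hv.continuous)
      (integrableOn_arc hv.continuous), ← integral_Ioc_eq_integral_Ioo,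
      ← intervalIntegral.integral_of_le (by linarith)]
    refine intervalIntegral.intervalIntegral_pos_of_pos_on
      (Continuous.intervalIntegrable (by fun_prop) _ _) (fun x hx => ?_) (by linarith)
    have hx' : x ^ 2 < c ^ 2 := sq_lt_sq' hx.1 hx.2
    have hpos : 0 < √(1 - x ^ 2) := Real.sqrt_pos.2 (by linarith)
    simp only [ofCoords_apply_one]
    linarith
  exact integrable_of_integral_mul_ne_zero (v := fun p : E2 => p 1)
    (by simpa only [add_zero] using (hflux 0).ne') (hflux 1).ne'

theorem IsNormalTrace.ae_eq_toReal_rnDeriv_sub (hc : c ^ 2 ≤ 1) (hc₀ : 0 < c)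
    (hn : IsNormalTrace (Metric.ball 0 1) (columnField c) (μH[1].restrict (Metric.sphere 0 1)) n) :
    ∀ᵐ p ∂μH[1].restrict (Metric.sphere 0 1), n p
      = ((arcMeasure c 1).rnDeriv (μH[1].restrict (Metric.sphere 0 1)) p).toReal
        - ((arcMeasure c (-1)).rnDeriv (μH[1].restrict (Metric.sphere 0 1)) p).toReal :=
  ae_eq_toReal_rnDeriv_sub_of_integral_eq (arcMeasure_le_hausdorffMeasure hc (one_pow 2))
    (arcMeasure_le_hausdorffMeasure hc neg_one_sq) (hn.integrable hc hc₀) fun φ hφ => by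
      rw [← hn φ hφ.contDiff_one, setIntegral_inner_columnField_eq_sub hφ.contDiff_one]

theorem IsNormalTrace.ae_abs_le_one (hc : c ^ 2 ≤ 1) (hc₀ : 0 < c)
    (hn : IsNormalTrace (Metric.ball 0 1) (columnField c) (μH[1].restrict (Metric.sphere 0 1)) n) :
    ∀ᵐ p ∂μH[1].restrict (Metric.sphere 0 1), |n p| ≤ 1 := by
  filter_upwards [hn.ae_eq_toReal_rnDeriv_sub hc hc₀, abs_toReal_rnDeriv_sub_le_one
    (arcMeasure_le_hausdorffMeasure hc (one_pow 2))
    (arcMeasure_le_hausdorffMeasure hc neg_one_sq)] with p hp hle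
  rwa [hp]

theorem IsNormalTrace.ae_eq_zero (hc : 2 * c ^ 2 ≤ 1) (hc₀ : 0 < c)
    (hn : IsNormalTrace (Metric.ball 0 1) (columnField c) (μH[1].restrict (Metric.sphere 0 1)) n) :
    ∀ᵐ p ∂(μH[1].restrict (Metric.sphere 0 1)).restrict {p | |p 1| ≤ c}, n p = 0 := by
  filter_upwards [ae_restrict_of_ae (hn.ae_eq_toReal_rnDeriv_sub (by nlinarith) hc₀),
    rnDeriv_ae_eq_zero_of_measure_eq_zero (arcMeasure_abs_le_eq_zero hc (one_pow 2)),
    rnDeriv_ae_eq_zero_of_measure_eq_zero (arcMeasure_abs_le_eq_zero hc neg_one_sq)]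
    with p hp hupper hlower
  simp [hp, hupper, hlower]

end NormalTrace

/-- Brothers–Marcellini-type non-uniqueness on the disk. On
`Ω = B(0,1) ⊂ ℝ²` with `Γ = {|y| > 1/√2} ∩ ∂Ω`, `f = 0` on `{y < −1/√2}`, `f = 1`
on `{y > 1/√2}`, for every `λ ∈ [0,1]` the function `u_λ` (equal to `0`, `λ`, `1`
in the three horizontal strips) together with the vector field `z = (0,1)` on
`{|x| < 1/√2}` and `z = 0` on `{|x| > 1/√2}` satisfies all four conditions of the
1-Laplace formulation. The total variation measure `TVμ = |Du_λ|`, the Anzellotti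
pairing measure `πz = (z,Du_λ)`, the trace `Tu` and the normal trace `ntz = [z,ν]`
are characterized by their defining properties, stated as hypotheses. -/
theorem disk_brothers_marcellini_oneLaplace
    (Ω : Set E2) (hΩ : Ω = Metric.ball (0 : E2) 1)
    (Γ : Set E2) (hΓ : Γ = {p : E2 | p ∈ frontier Ω ∧ (Real.sqrt 2)⁻¹ < |p 1|})
    (f : E2 → ℝ) (hf : f = fun p => if 0 < p 1 then (1:ℝ) else 0)
    (σ : Measure E2) (hσ : σ = (μH[1]).restrict (frontier Ω))
    (lam : ℝ) (hlam : lam ∈ Icc (0:ℝ) 1)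
    (u : E2 → ℝ) (hu : u = fun p => if p 1 < -(Real.sqrt 2)⁻¹ then 0
      else if p 1 ≤ (Real.sqrt 2)⁻¹ then lam else 1)
    (z : E2 → E2) (hz : z = fun p => if |p 0| < (Real.sqrt 2)⁻¹ then
      EuclideanSpace.single (1 : Fin 2) (1:ℝ) else 0)
    -- the total variation measure |Du_λ| on Ω, via the defining sup formula
    (TVμ : Measure E2) (hTVc : TVμ Ωᶜ = 0)
    (hTV : ∀ A : Set E2, IsOpen A → A ⊆ Ω →
      TVμ A = ⨆ w : {w : E2 → E2 // ContDiff ℝ 1 w ∧ HasCompactSupport w ∧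
          tsupport w ⊆ A ∧ ∀ x, ‖w x‖ ≤ 1},
        ENNReal.ofReal (∫ x in A, u x * div2 w.1 x))
    -- the Anzellotti pairing measure (z,Du_λ), via its distributional definition
    (πz : Measure E2) (hπc : πz Ωᶜ = 0)
    (hπ : ∀ ϕ : E2 → ℝ, ContDiff ℝ (⊤ : ℕ∞) ϕ → HasCompactSupport ϕ → tsupport ϕ ⊆ Ω →
      ∫ x, ϕ x ∂πz = -∫ x in Ω, u x * ⟪z x, gradient ϕ x⟫)
    -- the BV boundary trace of u_λ, via its a.e. averaged characterization
    (Tu : E2 → ℝ)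
    (hTu : ∀ᵐ p ∂σ, Tendsto
      (fun r => (∫ y in Metric.ball p r ∩ Ω, |u y - Tu p|) /
        (volume (Metric.ball p r ∩ Ω)).toReal) (nhdsWithin 0 (Ioi 0)) (nhds 0))
    -- the normal trace [z,ν], via Anzellotti's Green formula (div z = 0)
    (ntz : E2 → ℝ)
    (hntz : ∀ v : E2 → ℝ, ContDiff ℝ 1 v →
      ∫ x in Ω, ⟪z x, gradient v x⟫ = ∫ x, ntz x * v x ∂σ) :
    (∀ p, ‖z p‖ ≤ 1) ∧
    DivFreeOn Ω z ∧
    (∀ A : Set E2, MeasurableSet A → A ⊆ Ω → πz A = TVμ A) ∧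
    (∀ᵐ x ∂σ.restrict Γ, |ntz x| ≤ 1 ∧ ntz x * (f x - Tu x) = |f x - Tu x|) ∧
    (∀ᵐ x ∂σ.restrict (frontier Ω \ Γ), ntz x = 0) := by
  subst hΩ hΓ hσ hf
  obtain rfl : u = fun p => stepProfile (√2)⁻¹ lam (p 1) := hu
  obtain rfl : z = columnField (√2)⁻¹ := hz
  rw [frontier_ball 0 one_ne_zero] at *
  have hc₀ : 0 < (√2)⁻¹ := by positivity
  have hc : 2 * (√2)⁻¹ ^ 2 = 1 := by norm_num
  have hc₁ : (√2)⁻¹ ^ 2 ≤ 1 := by linarith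
  have hn : IsNormalTrace (Metric.ball 0 1) (columnField (√2)⁻¹) _ ntz := hntz
  refine ⟨norm_columnField_le_one, divFreeOn_columnField _, fun A _ hA => ?_, ?_, ?_⟩
  · rw [← Measure.restrict_eq_self πz hA, ← Measure.restrict_eq_self TVμ hA,
      IsTotalVariation.restrict_ball_eq_layerMeasure hc₀ hlam hTV,
      restrict_ball_eq_layerMeasure hc hc₀ hlam
        fun φ hφ => hπ φ hφ.contDiff hφ.hasCompactSupport hφ.tsupport_subset]
  · have hΓ : MeasurableSet {p : E2 | p ∈ Metric.sphere 0 1 ∧ (√2)⁻¹ < |p 1|} :=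
      Metric.isClosed_sphere.measurableSet.inter
        (isOpen_lt continuous_const (by fun_prop : Continuous fun p : E2 => |p 1|)).measurableSet
    filter_upwards [ae_restrict_of_ae (hn.ae_abs_le_one hc₁ hc₀), ae_restrict_of_ae hTu,
      ae_restrict_mem hΓ] with p hp hTp ⟨hpS, hpc⟩
    exact ⟨hp, by rw [trace_stepProfile_eq hc₀ hpS hpc hTp, sub_self, mul_zero, abs_zero]⟩
  · exact ae_restrict_of_ae_restrict_of_subset
      (fun p hp => not_lt.1 fun h => hp.2 ⟨hp.1, h⟩) (hn.ae_eq_zero hc.le hc₀)
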